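/- For any tree $T_m$ on $m$ vertices and any graph $G$ on $n$ vertices with $e$ edges, $t(T_m, G) \geq t(K_2, G)^{m-1}$, where $t(H,G) = \hom(H,G)/n^{|V(H)|}$ is the homomorphism density. Equivalently, $\hom(T_m,G) \cdot n^{m-2} \geq (2e)^{m-1}$. -/

import Mathlib

/-- The number of graph homomorphisms from `H` to `G`. -/
noncomputable def homCount {α β : Type*} (H : SimpleGraph α) (G : SimpleGraph β) : ℕ :=
  Nat.card (H →g G)

universe u

/-- There is a probability distribution on homomorphisms with stationary vertex marginals and
large entropy. -/
theorem exists_hom_distribution {W : Type*} [Fintype W] [DecidableEq W]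
    (G : SimpleGraph W) [DecidableRel G.Adj] (M L : ℝ) (hM : 0 < M)
    (hMd : ∑ w, (G.degree w : ℝ) = M)
    (hL : L = ∑ w, (G.degree w : ℝ) / M * Real.log (G.degree w)) :
    ∀ (m : ℕ) {V : Type u} [Fintype V] [DecidableEq V] (T : SimpleGraph V), T.IsTree →
      Fintype.card V = m →
      ∃ p : (V → W) → ℝ, (∀ φ, 0 ≤ p φ) ∧
        (∀ φ, p φ ≠ 0 → ∀ a b, T.Adj a b → G.Adj (φ a) (φ b)) ∧
        (∀ φ, p φ ≠ 0 → ∀ a, (G.degree (φ a) : ℝ) ≠ 0) ∧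
        (∀ a (f : W → ℝ), ∑ φ, p φ * f (φ a) = ∑ w, (G.degree w : ℝ) / M * f w) ∧
        ∑ φ, p φ * Real.log (p φ) = -(Real.log M + ((m : ℝ) - 2) * L) := by
  intro m
  induction m with
  | zero =>
    intro V _ _ T hT hc
    have := hT.1.nonempty
    exact absurd hc Fintype.card_ne_zero
  | succ k ih =>
    intro V _ _ T hT hc
    have hne := hT.1.nonempty
    rcases subsingleton_or_nontrivial V with hs | hn
    · have : Unique V := uniqueOfSubsingleton hne.some
      have hk : k = 0 := by
        have := Fintype.card_le_one_iff_subsingleton.mpr hs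
        omega
      subst hk
      have hsum : ∀ F : W → ℝ, ∑ φ : V → W, F (φ default) = ∑ w, F w := fun F =>
        Fintype.sum_equiv (Equiv.funUnique V W) _ _ (fun φ => rfl)
      refine ⟨fun φ => (G.degree (φ default) : ℝ) / M, fun φ => by positivity, ?_, ?_, ?_, ?_⟩
      · intro φ _ a b hab
        exact absurd (Subsingleton.elim a b) hab.ne
      · intro φ h a h0
        rw [Subsingleton.elim a default] at h0
        simp [h0] at h
      · intro a f
        rw [Subsingleton.elim a default]
        exact hsum (fun w => (G.degree w : ℝ) / M * f w)
      · rw [hsum (fun w => (G.degree w : ℝ) / M * Real.log ((G.degree w : ℝ) / M))]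
        have h1 : ∀ w, (G.degree w : ℝ) / M * Real.log ((G.degree w : ℝ) / M) =
            (G.degree w : ℝ) / M * Real.log (G.degree w) - (G.degree w : ℝ) * (Real.log M / M) := by
          intro w
          by_cases h0 : (G.degree w : ℝ) = 0
          · simp [h0]
          · rw [Real.log_div h0 hM.ne']; ring
        simp_rw [h1]
        rw [Finset.sum_sub_distrib, ← hL, ← Finset.sum_mul, hMd]
        field_simp
        push_cast
        ring
    · classical
      obtain ⟨v, hv⟩ := hT.exists_vert_degree_one_of_nontrivial
      obtain ⟨u, huv, hu⟩ := SimpleGraph.degree_eq_one_iff_existsUnique_adj.mp hv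
      have hT' : (T.induce {x | x ≠ v}).IsTree :=
        ⟨hT.1.induce_compl_singleton_of_degree_eq_one hv, hT.2.induce _⟩
      have hc' : Fintype.card {x // x ≠ v} = k := by
        rw [Fintype.card_subtype_compl]; simp [hc]
      obtain ⟨p, hp0, hph, hpd, hpm, hpe⟩ := ih (V := {x // x ≠ v}) (T.induce {x | x ≠ v}) hT' hc'
      let u' : {x // x ≠ v} := ⟨u, huv.ne'⟩
      let K : W → W → ℝ := fun x w => if G.Adj x w then 1 / (G.degree x : ℝ) else 0
      have hK0 : ∀ x w, 0 ≤ K x w := fun x w => by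
        simp only [K]; split_ifs <;> positivity
      have hKs : ∀ x, (G.degree x : ℝ) ≠ 0 → ∑ w, K x w = 1 := by
        intro x hx
        simp only [K]
        rw [← Finset.sum_filter, Finset.sum_const, nsmul_eq_mul, ← SimpleGraph.neighborFinset_eq_filter,
          SimpleGraph.card_neighborFinset_eq_degree]
        field_simp
      have hdpos : ∀ x w, G.Adj x w → (G.degree x : ℝ) ≠ 0 := by
        intro x w h
        have : 0 < G.degree x := (G.degree_pos_iff_exists_adj x).mpr ⟨w, h⟩
        positivity
      have hKt : ∀ w, ∑ x, (G.degree x : ℝ) / M * K x w = (G.degree w : ℝ) / M := by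
        intro w
        have : ∀ x, (G.degree x : ℝ) / M * K x w = if G.Adj w x then 1 / M else 0 := by
          intro x
          simp only [K, G.adj_comm w x]
          split_ifs with h
          · have := hdpos x w h
            field_simp
          · simp
        simp_rw [this]
        rw [← Finset.sum_filter, Finset.sum_const, nsmul_eq_mul, ← SimpleGraph.neighborFinset_eq_filter,
          SimpleGraph.card_neighborFinset_eq_degree]
        ring
      let q : W → ({x // x ≠ v} → W) → ℝ := fun w ψ => p ψ * K (ψ u') w
      have hsum : ∀ F : W → ({x // x ≠ v} → W) → ℝ,
          ∑ φ : V → W, F (φ v) (fun j => φ j) = ∑ ψ, ∑ w, F w ψ := by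
        intro F
        rw [Finset.sum_comm, ← Fintype.sum_prod_type' (f := F)]
        exact Fintype.sum_equiv (Equiv.funSplitAt v W) _ _ (fun φ => rfl)
      have hpK : ∀ ψ, p ψ * ∑ w, K (ψ u') w = p ψ := by
        intro ψ
        by_cases h : p ψ = 0
        · simp [h]
        · rw [hKs _ (hpd ψ h u'), mul_one]
      have hqK : ∀ w ψ, q w ψ ≠ 0 → p ψ ≠ 0 ∧ G.Adj (ψ u') w := by
        intro w ψ h
        simp only [q, K] at h
        constructor
        · intro h0; simp [h0] at h
        · by_contra h0; simp [h0] at h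
      refine ⟨fun φ => q (φ v) (fun j => φ j), fun φ => mul_nonneg (hp0 _) (hK0 _ _), ?_, ?_, ?_, ?_⟩
      · intro φ h a b hab
        obtain ⟨h1, h2⟩ := hqK _ _ h
        by_cases ha : a = v
        · subst ha
          rw [hu b hab]
          exact h2.symm
        · by_cases hb : b = v
          · subst hb
            rw [hu a hab.symm]
            exact h2
          · exact hph _ h1 ⟨a, ha⟩ ⟨b, hb⟩ hab
      · intro φ h a
        obtain ⟨h1, h2⟩ := hqK _ _ h
        by_cases ha : a = v
        · subst ha
          exact hdpos _ _ h2.symm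
        · exact hpd _ h1 ⟨a, ha⟩
      · intro a f
        by_cases ha : a = v
        · subst ha
          rw [hsum (fun w ψ => q w ψ * f w)]
          have : ∀ ψ, ∑ w, q w ψ * f w = p ψ * (fun x => ∑ w, K x w * f w) (ψ u') := by
            intro ψ
            simp only [q, Finset.mul_sum, mul_assoc]
          simp_rw [this]
          rw [hpm u' (fun x => ∑ w, K x w * f w)]
          simp_rw [Finset.mul_sum]
          rw [Finset.sum_comm]
          refine Finset.sum_congr rfl fun w _ => ?_
          rw [← hKt w, Finset.sum_mul]
          exact Finset.sum_congr rfl fun x _ => by ring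
        · rw [hsum (fun w ψ => q w ψ * f (ψ ⟨a, ha⟩)), ← hpm ⟨a, ha⟩ f]
          refine Finset.sum_congr rfl fun ψ _ => ?_
          rw [← Finset.sum_mul]
          simp only [q]
          rw [← Finset.mul_sum, hpK]
      · rw [hsum (fun w ψ => q w ψ * Real.log (q w ψ))]
        have h1 : ∀ ψ, ∑ w, q w ψ * Real.log (q w ψ) =
            p ψ * Real.log (p ψ) - p ψ * Real.log (G.degree (ψ u')) := by
          intro ψ
          have : ∀ w, q w ψ * Real.log (q w ψ) =
              (p ψ * K (ψ u') w) * (Real.log (p ψ) - Real.log (G.degree (ψ u'))) := by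
            intro w
            by_cases h : q w ψ = 0
            · have h' : p ψ * K (ψ u') w = 0 := h
              rw [h, h']; simp
            · obtain ⟨h1, h2⟩ := hqK _ _ h
              have h3 := hdpos _ _ h2
              have h4 : K (ψ u') w = 1 / (G.degree (ψ u') : ℝ) := by simp [K, h2]
              simp only [q]
              rw [h4, mul_one_div, Real.log_div h1 h3]
          simp_rw [this]
          rw [← Finset.sum_mul, ← Finset.mul_sum, hpK]
          ring
        simp_rw [h1]
        rw [Finset.sum_sub_distrib, hpe, hpm u' (fun x => Real.log (G.degree x)), ← hL]
        push_cast
        ring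

/-- Sidorenko's conjecture for trees: `t(T_m, G) ≥ t(K_2, G)^(m-1)`, where
`t(H,G) = hom(H,G) / n^|V(H)|` and `t(K_2,G) = 2e/n²`. -/
theorem stmt_6 {V W : Type*} [Fintype V] [Fintype W] [DecidableEq W]
    (T : SimpleGraph V) (hT : T.IsTree)
    (G : SimpleGraph W) [DecidableRel G.Adj] (hW : 0 < Fintype.card W) :
    (homCount T G : ℝ) / (Fintype.card W : ℝ) ^ (Fintype.card V) ≥
      ((2 * G.edgeFinset.card : ℝ) / (Fintype.card W : ℝ) ^ 2) ^ (Fintype.card V - 1) := by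
  classical
  have hne := hT.1.nonempty
  have hn : (0 : ℝ) < Fintype.card W := by exact_mod_cast hW
  rcases subsingleton_or_nontrivial V with hs | hnt
  · have : Unique V := uniqueOfSubsingleton hne.some
    have hc : Fintype.card V = 1 := Fintype.card_unique
    have e : (T →g G) ≃ W :=
      { toFun := fun f => f default
        invFun := fun w => ⟨fun _ => w, fun {a b} h => absurd (Subsingleton.elim a b) h.ne⟩
        left_inv := fun f => by ext a; rw [Subsingleton.elim a default]; rfl
        right_inv := fun w => rfl }
    have : homCount T G = Fintype.card W := by
      rw [homCount, Nat.card_congr e, Nat.card_eq_fintype_card]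
    rw [this, hc]
    simp [hn.ne']
  · have hm : 2 ≤ Fintype.card V := Fintype.one_lt_card
    obtain ⟨j, hj⟩ := Nat.exists_eq_add_of_le hm
    have hMd : ∑ w, (G.degree w : ℝ) = 2 * G.edgeFinset.card := by
      exact_mod_cast G.sum_degrees_eq_twice_card_edges
    generalize hMdef : (2 * G.edgeFinset.card : ℝ) = M at hMd ⊢
    have hM0 : 0 ≤ M := by rw [← hMdef]; positivity
    rcases hM0.eq_or_lt with h0 | hM
    · rw [← h0, zero_div, zero_pow (by omega)]
      positivity
    obtain ⟨p, hp0, hph, -, hpm, hpe⟩ := exists_hom_distribution G M _ hM hMd rfl _ T hT rfl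
    set L := ∑ w, (G.degree w : ℝ) / M * Real.log (G.degree w) with hL
    have hp1 : ∑ φ, p φ = 1 := by
      have := hpm hne.some (fun _ => 1)
      simp only [mul_one] at this
      rw [this, ← Finset.sum_div, hMd, div_self hM.ne']
    have hLb : Real.log (M / Fintype.card W) ≤ L := by
      set c := M / Fintype.card W with hcdef
      have hcpos : 0 < c := by positivity
      have h1 : ∀ w, (G.degree w : ℝ) * ((Real.log c + 1) / M) - c / M ≤
          (G.degree w : ℝ) / M * Real.log (G.degree w) := by
        intro w
        rcases (Nat.cast_nonneg (α := ℝ) (G.degree w)).eq_or_lt with h | h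
        · rw [← h]; simp; positivity
        · have h2 := Real.log_le_sub_one_of_pos (div_pos hcpos h)
          rw [Real.log_div hcpos.ne' h.ne'] at h2
          have h3 := mul_le_mul_of_nonneg_left h2 (div_pos h hM).le
          have h4 : (G.degree w : ℝ) / M * (c / G.degree w - 1) = c / M - G.degree w / M := by
            field_simp
          rw [h4] at h3
          have h5 : (G.degree w : ℝ) * ((Real.log c + 1) / M) =
            (G.degree w : ℝ) / M * Real.log c + G.degree w / M := by ring
          rw [h5]
          linarith
      have h2 := Finset.sum_le_sum (fun w (_ : w ∈ Finset.univ) => h1 w)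
      rw [Finset.sum_sub_distrib, ← Finset.sum_mul, hMd, Finset.sum_const, nsmul_eq_mul,
        Finset.card_univ] at h2
      have h3 : M * ((Real.log c + 1) / M) - (Fintype.card W : ℝ) * (c / M) = Real.log c := by
        have : (Fintype.card W : ℝ) * (c / M) = 1 := by rw [hcdef]; field_simp
        rw [this]; field_simp; ring
      rw [h3] at h2
      exact h2
    let S : Finset (V → W) := Finset.univ.filter (fun φ => ∀ a b, T.Adj a b → G.Adj (φ a) (φ b))
    have hN : homCount T G = S.card := by
      have e : (T →g G) ≃ {φ : V → W // φ ∈ S} :=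
        { toFun := fun f => ⟨f, by simp only [S, Finset.mem_filter, Finset.mem_univ, true_and]; exact fun a b h => f.map_rel h⟩
          invFun := fun φ => ⟨φ.1, fun {a b} h => (Finset.mem_filter.mp φ.2).2 a b h⟩
          left_inv := fun f => rfl
          right_inv := fun φ => rfl }
      rw [homCount, Nat.card_congr e, Nat.card_eq_fintype_card, Fintype.card_coe]
    have hout : ∀ φ, φ ∉ S → p φ = 0 := by
      intro φ h
      by_contra h0
      exact h (Finset.mem_filter.mpr ⟨Finset.mem_univ _, hph φ h0⟩)
    have hS1 : ∑ φ ∈ S, p φ = 1 := by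
      rw [← hp1]
      exact Finset.sum_subset (Finset.subset_univ _) (fun φ _ h => hout φ h)
    have hSe : ∑ φ ∈ S, p φ * Real.log (p φ) = ∑ φ, p φ * Real.log (p φ) :=
      Finset.sum_subset (Finset.subset_univ _) (fun φ _ h => by rw [hout φ h]; simp)
    have hSpos : (0 : ℝ) < S.card := by
      have : S.Nonempty := by
        by_contra h
        rw [Finset.not_nonempty_iff_eq_empty] at h
        rw [h] at hS1
        simp at hS1
      exact_mod_cast this.card_pos
    rw [hN]
    set N : ℝ := (S.card : ℝ) with hNdef
    have hent : -Real.log N ≤ ∑ φ, p φ * Real.log (p φ) := by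
      rw [← hSe]
      have h1 : ∀ φ ∈ S, p φ * (1 - Real.log N) - 1 / N ≤ p φ * Real.log (p φ) := by
        intro φ _
        rcases (hp0 φ).eq_or_lt with h | h
        · rw [← h]; simp; positivity
        · have h2 := Real.log_le_sub_one_of_pos (one_div_pos.mpr (mul_pos hSpos h))
          rw [one_div, Real.log_inv, Real.log_mul hSpos.ne' h.ne'] at h2
          have h3 := mul_le_mul_of_nonneg_left h2 h.le
          have h4 : p φ * ((N * p φ)⁻¹ - 1) = 1 / N - p φ := by field_simp
          rw [h4] at h3
          linarith
      have h2 := Finset.sum_le_sum h1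
      rw [Finset.sum_sub_distrib, ← Finset.sum_mul, hS1, Finset.sum_const, nsmul_eq_mul,
        ← hNdef, mul_one_div_cancel hSpos.ne'] at h2
      linarith
    rw [hpe] at hent
    have hfin : Real.log M + j * Real.log (M / Fintype.card W) ≤ Real.log N := by
      have : (0 : ℝ) ≤ j := Nat.cast_nonneg j
      have h2 := mul_le_mul_of_nonneg_left hLb this
      rw [hj] at hent
      push_cast at hent
      have h3 : (2 + (j : ℝ) - 2) * L = j * L := by ring
      rw [h3] at hent
      linarith
    have hcp : 0 < M / Fintype.card W := by positivity
    have hfin2 : M * (M / Fintype.card W) ^ j ≤ N := by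
      rw [← Real.log_le_log_iff (by positivity) hSpos, Real.log_mul hM.ne' (by positivity),
        Real.log_pow]
      exact hfin
    rw [ge_iff_le, hj, show 2 + j - 1 = j + 1 by omega, le_div_iff₀ (by positivity)]
    refine le_of_eq_of_le ?_ hfin2
    rw [div_pow, div_pow, ← pow_mul]
    field_simp
    ring
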